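/- arXiv:2003.10263 — 2 statements merged into one kernel-verified Lean document; each statement's English description precedes it below -/
import Mathlib

section
/- Let [a,b] be a nondegenerate compact interval, let (aₙ)_{n≥1} ∈ c₀ \ ℓ₁ with aₙ ≠ 0 for all n, and let U be a linear subspace of C([a,b])^ℕ such that U \ {0} ⊂ ℱ. Then the set 𝓤 := { (aₙ uₙ)ₙ : (uₙ)ₙ ∈ U } is a linear subspace of C([a,b])^ℕ, the map (uₙ)ₙ ↦ (aₙuₙ)ₙ is an injective linear map from U onto 𝓤 (so 𝓤 has the same dimension as U), and 𝓤 \ {0} ⊂ 𝒜ℳ𝒲. -/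
open Filter Topology

/-- The family ℱ: sequences of continuous functions on [a,b] with pairwise disjoint
supports, uniformly bounded and uniformly far from zero in sup norm. -/
def MemF (a b : ℝ) (u : ℕ → C(Set.Icc a b, ℝ)) : Prop :=
  (∀ n m, n ≠ m → Function.support ⇑(u n) ∩ Function.support ⇑(u m) = ∅) ∧
  0 < ⨅ n, ‖u n‖ ∧ BddAbove (Set.range fun n => ‖u n‖)

/-- Anti M-Weierstrass sequences. -/
def AntiMW (a b : ℝ) (f : ℕ → C(Set.Icc a b, ℝ)) : Prop :=
  (∀ x : Set.Icc a b, Summable fun n => |f n x|) ∧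
  (∃ S : Set.Icc a b → ℝ,
    TendstoUniformly (fun N x => ∑ n ∈ Finset.range N, f n x) S atTop) ∧
  ¬ Summable fun n => ‖f n‖

/-!
At each point at most one function of a sequence with pairwise disjoint supports is nonzero. Hence
every pointwise series has at most one nonzero term, and the tail `∑_{n ≥ N} cₙ uₙ(x)` is a single
term `cₖ uₖ(x)` with `k ≥ N`, which is uniformly small because `c → 0` and the `uₙ` are bounded. As
the `‖uₙ‖` are bounded below, `∑ ‖cₙ uₙ‖` diverges along with `∑ ‖cₙ‖`. Moreover all terms of a
nonzero element of `U` are nonzero, so a single nonvanishing `cₙ` makes `u ↦ (cₙ uₙ)` injective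
on `U`.
-/

universe v

/-- The diagonal operator `(uₙ) ↦ (cₙ uₙ)` on families in `M`, with coefficients `c`. -/
def diagonalMap {ι R M : Type*} [CommSemiring R] [AddCommMonoid M] [Module R M] (c : ι → R) :
    (ι → M) →ₗ[R] (ι → M) :=
  LinearMap.pi fun n => c n • LinearMap.proj n

theorem injOn_diagonalMap {ι R M : Type*} [CommRing R] [IsDomain R] [AddCommGroup M] [Module R M]
    [Module.IsTorsionFree R M] {c : ι → R} {n : ι} (hcn : c n ≠ 0) {U : Submodule R (ι → M)}
    (hU : ∀ u ∈ U, u ≠ 0 → u n ≠ 0) : Set.InjOn (diagonalMap c) (U : Set (ι → M)) := by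
  refine LinearMap.injOn_of_disjoint_ker subset_rfl (Submodule.disjoint_def.2 fun u hu hker => ?_)
  have hterm : c n • u n = 0 := congrFun (LinearMap.mem_ker.1 hker) n
  by_contra hu0
  exact smul_ne_zero hcn (hU u hu hu0) hterm

theorem rank_map_eq_of_injOn {R : Type*} {M N : Type v} [Ring R] [AddCommGroup M] [Module R M]
    [AddCommGroup N] [Module R N] {f : M →ₗ[R] N} {U : Submodule R M} (hf : Set.InjOn f U) :
    Module.rank R (U.map f) = Module.rank R U := by
  rw [← LinearMap.range_domRestrict]
  exact rank_range_of_injective _ hf.injective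

section DisjointSupports

open Function

variable {ι X E : Type*}

theorem subsingleton_support_apply [Zero E] {f : ι → X → E}
    (hf : Pairwise (Disjoint on fun n => support (f n))) (x : X) :
    (support fun n => f n x).Subsingleton := by
  intro m hm n hn
  by_contra hmn
  exact Set.disjoint_left.1 (hf hmn) hm hn

theorem exists_tsum_eq_of_subsingleton_support [Nonempty ι] [AddCommMonoid E] [TopologicalSpace E]
    {g : ι → E} (hg : (support g).Subsingleton) : ∃ k, ∑' n, g n = g k := by
  obtain hempty | ⟨k, hk⟩ := hg.eq_empty_or_singleton
  · simp [support_eq_empty_iff.1 hempty]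
  · exact ⟨k, tsum_eq_single k fun n hn => notMem_support.1 (by simpa [hk] using hn)⟩

theorem summable_norm_of_subsingleton_support [SeminormedAddCommGroup E] {g : ι → E}
    (hg : (support g).Subsingleton) : Summable fun n => ‖g n‖ :=
  summable_of_hasFiniteSupport
    (hg.finite.subset fun _ hn hg0 => hn (by simp only [hg0, norm_zero]))

theorem dist_tsum_sum_range_lt_of_subsingleton_support [NormedAddCommGroup E]
    {g : ℕ → E} (hg : (support g).Subsingleton) {N : ℕ} {ε : ℝ} (hN : ∀ n ≥ N, ‖g n‖ < ε) :
    dist (∑' n, g n) (∑ n ∈ Finset.range N, g n) < ε := by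
  have htail : (support fun n => g (n + N)).Subsingleton :=
    hg.preimage (add_left_injective N)
  obtain ⟨k, hk⟩ := exists_tsum_eq_of_subsingleton_support htail
  have hsum : Summable g := summable_of_hasFiniteSupport hg.finite
  rw [← hsum.sum_add_tsum_nat_add N, dist_self_add_left, hk]
  exact hN _ (Nat.le_add_left N k)

theorem tendstoUniformly_tsum_of_disjoint_support [NormedAddCommGroup E] {f : ℕ → X → E}
    (hf : Pairwise (Disjoint on fun n => support (f n))) (hf0 : TendstoUniformly f 0 atTop) :
    TendstoUniformly (fun N x => ∑ n ∈ Finset.range N, f n x) (fun x => ∑' n, f n x) atTop := by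
  rw [Metric.tendstoUniformly_iff] at hf0 ⊢
  intro ε hε
  obtain ⟨N₀, hN₀⟩ := eventually_atTop.1 (hf0 ε hε)
  filter_upwards [eventually_ge_atTop N₀] with N hN x
  refine dist_tsum_sum_range_lt_of_subsingleton_support (subsingleton_support_apply hf x)
    fun n hn => ?_
  simpa using hN₀ n (hN.trans hn) x

end DisjointSupports

theorem not_summable_norm_smul {ι 𝕜 E : Type*} [NormedField 𝕜] [SeminormedAddCommGroup E]
    [NormedSpace 𝕜 E] {c : ι → 𝕜} {u : ι → E} {δ : ℝ} (hδ : 0 < δ) (hu : ∀ n, δ ≤ ‖u n‖)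
    (hc : ¬ Summable fun n => ‖c n‖) : ¬ Summable fun n => ‖c n • u n‖ := by
  intro hs
  refine hc (Summable.of_nonneg_of_le (fun n => norm_nonneg _) (fun n => ?_) (hs.div_const δ))
  rw [le_div_iff₀ hδ, norm_smul]
  gcongr
  exact hu n

theorem iInf_norm_le {ι E : Type*} [SeminormedAddCommGroup E] (u : ι → E) (n : ι) :
    ⨅ m, ‖u m‖ ≤ ‖u n‖ :=
  ciInf_le ⟨0, Set.forall_mem_range.2 fun m => norm_nonneg (u m)⟩ n

section ContinuousMaps

open Function

variable {X E : Type*} [TopologicalSpace X] [CompactSpace X] [NormedAddCommGroup E]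

/-- The family `ℱ` for continuous functions from a compact space to a normed group: pairwise
disjoint supports and sup norms bounded above and away from zero. -/
structure IsDisjointSeminormalized (u : ℕ → C(X, E)) : Prop where
  pairwise_disjoint_support : Pairwise (Disjoint on fun n => support (u n))
  iInf_norm_pos : 0 < ⨅ n, ‖u n‖
  bddAbove_norm : BddAbove (Set.range fun n => ‖u n‖)

/-- Anti M-Weierstrass sequences of continuous functions from a compact space to a normed group:
the series converges absolutely at every point and uniformly, but the sup norms are not summable. -/
structure IsAntiMWeierstrass (f : ℕ → C(X, E)) : Prop where
  summable_norm_apply : ∀ x, Summable fun n => ‖f n x‖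
  tendstoUniformly_sum : ∃ S : X → E,
    TendstoUniformly (fun N x => ∑ n ∈ Finset.range N, f n x) S atTop
  not_summable_norm : ¬ Summable fun n => ‖f n‖

namespace IsDisjointSeminormalized

variable {u : ℕ → C(X, E)}

theorem ne_zero (hu : IsDisjointSeminormalized u) (n : ℕ) : u n ≠ 0 :=
  norm_pos_iff.1 (hu.iInf_norm_pos.trans_le (iInf_norm_le u n))

variable {𝕜 : Type*} [NormedField 𝕜] [NormedSpace 𝕜 E] {c : ℕ → 𝕜}

theorem isAntiMWeierstrass_smul (hu : IsDisjointSeminormalized u) (hc0 : Tendsto c atTop (𝓝 0))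
    (hc1 : ¬ Summable fun n => ‖c n‖) : IsAntiMWeierstrass fun n => c n • u n := by
  have hdisj : Pairwise (Disjoint on fun n => support (c n • u n)) :=
    hu.pairwise_disjoint_support.mono fun m n h =>
      h.mono (support_const_smul_subset _ _) (support_const_smul_subset _ _)
  have hzero : Tendsto (fun n => c n • u n) atTop (𝓝 0) :=
    hc0.zero_smul_isBoundedUnder_le hu.bddAbove_norm.isBoundedUnder_of_range
  exact
    { summable_norm_apply := fun x =>
        summable_norm_of_subsingleton_support (subsingleton_support_apply hdisj x)
      tendstoUniformly_sum := ⟨_, tendstoUniformly_tsum_of_disjoint_support hdisj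
        (ContinuousMap.tendsto_iff_tendstoUniformly.1 hzero)⟩
      not_summable_norm := not_summable_norm_smul hu.iInf_norm_pos (iInf_norm_le u) hc1 }

end IsDisjointSeminormalized

theorem stmt6_general {𝕜 : Type*} [NormedField 𝕜] [NormedSpace 𝕜 E] {c : ℕ → 𝕜}
    (hc0 : Tendsto c atTop (𝓝 0)) (hc1 : ¬ Summable fun n => ‖c n‖)
    (U : Submodule 𝕜 (ℕ → C(X, E))) (hU : ∀ u ∈ U, u ≠ 0 → IsDisjointSeminormalized u) :
    ∃ 𝓤 : Submodule 𝕜 (ℕ → C(X, E)),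
      (𝓤 : Set (ℕ → C(X, E))) = {F | ∃ u ∈ U, F = fun n => c n • u n} ∧
      Set.InjOn (fun u : ℕ → C(X, E) => fun n => c n • u n) U ∧
      Module.rank 𝕜 𝓤 = Module.rank 𝕜 U ∧
      ∀ F ∈ 𝓤, F ≠ 0 → IsAntiMWeierstrass F := by
  obtain ⟨n, hcn⟩ : ∃ n, c n ≠ 0 := by
    by_contra! hc
    exact hc1 (by simp [hc])
  have hinj : Set.InjOn (diagonalMap c) (U : Set (ℕ → C(X, E))) :=
    injOn_diagonalMap hcn fun u hu hu0 => (hU u hu hu0).ne_zero n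
  refine ⟨U.map (diagonalMap c), ?_, hinj, rank_map_eq_of_injOn hinj, ?_⟩
  · ext F
    exact exists_congr fun u => and_congr_right fun _ => eq_comm
  · rintro _ ⟨u, hu, rfl⟩ hF
    have hu0 : u ≠ 0 := fun h => hF (by rw [h, map_zero])
    exact (hU u hu hu0).isAntiMWeierstrass_smul hc0 hc1

end ContinuousMaps

theorem isDisjointSeminormalized_of_memF {a b : ℝ} {u : ℕ → C(Set.Icc a b, ℝ)} (hu : MemF a b u) :
    IsDisjointSeminormalized u :=
  ⟨fun m n hmn => Set.disjoint_iff_inter_eq_empty.2 (hu.1 m n hmn), hu.2.1, hu.2.2⟩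

theorem antiMW_of_isAntiMWeierstrass {a b : ℝ} {f : ℕ → C(Set.Icc a b, ℝ)}
    (hf : IsAntiMWeierstrass f) : AntiMW a b f :=
  ⟨hf.summable_norm_apply, hf.tendstoUniformly_sum, hf.not_summable_norm⟩

theorem stmt6 (a b : ℝ) (hab : a < b) (c : ℕ → ℝ)
    (hc0 : Tendsto c atTop (nhds 0)) (hcl1 : ¬ Summable fun n => |c n|)
    (hcne : ∀ n, c n ≠ 0)
    (U : Submodule ℝ (ℕ → C(Set.Icc a b, ℝ)))
    (hU : ∀ u ∈ U, u ≠ 0 → MemF a b u) :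
    ∃ 𝓤 : Submodule ℝ (ℕ → C(Set.Icc a b, ℝ)),
      (𝓤 : Set (ℕ → C(Set.Icc a b, ℝ))) =
        {F | ∃ u ∈ U, F = fun n => c n • u n} ∧
      Set.InjOn (fun u : ℕ → C(Set.Icc a b, ℝ) => fun n => c n • u n) U ∧
      Module.rank ℝ 𝓤 = Module.rank ℝ U ∧
      ∀ F ∈ 𝓤, F ≠ 0 → AntiMW a b F := by
  obtain ⟨𝓤, hset, hinj, hrank, hanti⟩ :=
    stmt6_general hc0 hcl1 U fun u hu hu0 => isDisjointSeminormalized_of_memF (hU u hu hu0)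
  exact ⟨𝓤, hset, hinj, hrank, fun F hF hF0 => antiMW_of_isAntiMWeierstrass (hanti F hF hF0)⟩
end

section
/- Let [a,b] be a nondegenerate compact interval. The set 𝒜ℳ𝒲 is maximal lineable in C([a,b])^ℕ: there exists a linear subspace M of C([a,b])^ℕ whose dimension (over ℝ) equals the cardinality of the continuum 𝔠 and such that M \ {0} ⊂ 𝒜ℳ𝒲. -/
open Filter Topology

/-!
If continuous functions `gₙ` of norm one have pairwise disjoint supports, then at each point the
series `∑ cₙ gₙ` has at most one nonzero term, so it converges absolutely, and it converges
uniformly as soon as `cₙ → 0`; on the other hand `∑ ‖cₙ gₙ‖ = ∑ |cₙ|`. It thus suffices to find a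
space of dimension `𝔠` of null sequences whose nonzero elements are not absolutely summable. The
span of `n ↦ n ^ r` for `-1 < r < 0` is such a space: a nontrivial combination is asymptotic to
its term of largest exponent. The functions `gₙ` come from Urysohn's lemma and exist on every
infinite compact Hausdorff space.
-/

open Asymptotics Cardinal Function Set

section LeadingTerm

variable {ι α 𝕜 E : Type*} [LinearOrder ι] [NormedField 𝕜] [NormedAddCommGroup E]
  [NormedSpace 𝕜 E] {L : Filter α} {f : ι → α → E}

theorem isEquivalent_linearCombination_max' (hf : ∀ i j, i < j → f i =o[L] f j)
    (l : ι →₀ 𝕜) (hl : l.support.Nonempty) :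
    Finsupp.linearCombination 𝕜 f l ~[L] l (l.support.max' hl) • f (l.support.max' hl) := by
  set m := l.support.max' hl
  have hmem : m ∈ l.support := l.support.max'_mem hl
  have lower_terms : (∑ i ∈ l.support.erase m, l i • f i) =o[L] (l m • f m) := by
    refine IsLittleO.sum fun i hi => ?_
    have hlt : i < m := l.support.lt_max'_of_mem_erase_max' hl hi
    exact (isLittleO_const_smul_right (Finsupp.mem_support_iff.1 hmem)).2
      ((hf i m hlt).const_smul_left (l i))
  rw [Finsupp.linearCombination_apply, Finsupp.sum, ← Finset.add_sum_erase _ _ hmem]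
  exact IsEquivalent.refl.add_isLittleO lower_terms

theorem linearIndependent_of_isLittleO (hf : ∀ i j, i < j → f i =o[L] f j)
    (hne : ∀ i, ¬ f i =ᶠ[L] 0) : LinearIndependent 𝕜 f := by
  refine linearIndependent_iff.2 fun l hl0 => ?_
  by_contra hl
  have hsupp : l.support.Nonempty := Finsupp.support_nonempty_iff.2 hl
  have hlead := isEquivalent_linearCombination_max' hf l hsupp
  rw [hl0] at hlead
  have hcoeff : l (l.support.max' hsupp) ≠ 0 :=
    Finsupp.mem_support_iff.1 (l.support.max'_mem hsupp)
  refine hne (l.support.max' hsupp) ?_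
  filter_upwards [isEquivalent_zero_iff_eventually_zero.1 hlead.symm] with x hx
  exact (smul_eq_zero.1 hx).resolve_left hcoeff

end LeadingTerm

section PowerSequences

/-- The sequence `n ↦ n ^ r` of real powers, used for the coefficients of the Anti M-Weierstrass
sequences. For `r ≠ 0` its value at `n = 0` is `0`. -/
noncomputable def natRpow (r : ℝ) (n : ℕ) : ℝ := (n : ℝ) ^ r

theorem tendsto_natRpow_of_neg {r : ℝ} (hr : r < 0) : Tendsto (natRpow r) atTop (𝓝 0) := by
  simpa only [neg_neg] using!
    (tendsto_rpow_neg_atTop (neg_pos.2 hr)).comp tendsto_natCast_atTop_atTop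

theorem natRpow_isLittleO {r s : ℝ} (hrs : r < s) : natRpow r =o[atTop] natRpow s := by
  have hpos : ∀ᶠ n : ℕ in atTop, (0 : ℝ) < n :=
    (eventually_gt_atTop 0).mono fun _ => Nat.cast_pos.2
  refine (isLittleO_iff_tendsto' (hpos.mono fun n hn h => ?_)).2 ?_
  · exact absurd h (Real.rpow_pos_of_pos hn s).ne'
  · refine (tendsto_natRpow_of_neg (sub_neg.2 hrs)).congr' (hpos.mono fun n hn => ?_)
    exact Real.rpow_sub hn r s

theorem linearIndependent_natRpow : LinearIndependent ℝ natRpow := by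
  refine linearIndependent_of_isLittleO (L := atTop) (fun _ _ => natRpow_isLittleO) fun r h => ?_
  obtain ⟨n, hn0, hn⟩ := (h.and (eventually_gt_atTop 0)).exists
  exact (Real.rpow_pos_of_pos (Nat.cast_pos.2 hn) r).ne' hn0

theorem not_summable_linearCombination_natRpow {l : ℝ →₀ ℝ} (hl : l ≠ 0)
    (hexp : ∀ r ∈ l.support, -1 ≤ r) : ¬ Summable (Finsupp.linearCombination ℝ natRpow l) := by
  have hsupp : l.support.Nonempty := Finsupp.support_nonempty_iff.2 hl
  have hmem := l.support.max'_mem hsupp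
  rw [(isEquivalent_linearCombination_max' (fun _ _ => natRpow_isLittleO) l hsupp).summable_iff_nat]
  intro hsum
  have hsum_pow := (summable_mul_left_iff (Finsupp.mem_support_iff.1 hmem)).1 hsum
  exact (Real.summable_nat_rpow.1 hsum_pow).not_ge (hexp _ hmem)

theorem rank_span_natRpow_image (s : Set ℝ) :
    Module.rank ℝ (Submodule.span ℝ (natRpow '' s)) = #s := by
  rw [rank_span_set (linearIndependent_natRpow.linearIndepOn s).id_image,
    mk_image_eq linearIndependent_natRpow.injective]

theorem tendsto_zero_of_mem_span_natRpow {s : Set ℝ} (hs : ∀ r ∈ s, r < 0) {c : ℕ → ℝ}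
    (hc : c ∈ Submodule.span ℝ (natRpow '' s)) : Tendsto c atTop (𝓝 0) := by
  induction hc using Submodule.span_induction with
  | mem c hc =>
    obtain ⟨r, hr, rfl⟩ := hc
    exact tendsto_natRpow_of_neg (hs r hr)
  | zero => exact tendsto_const_nhds
  | add c d _ _ hc hd => simpa only [add_zero] using! hc.add hd
  | smul t c _ hc => simpa only [smul_zero] using! hc.const_smul t

theorem not_summable_of_mem_span_natRpow {s : Set ℝ} (hs : ∀ r ∈ s, -1 ≤ r) {c : ℕ → ℝ}
    (hc : c ∈ Submodule.span ℝ (natRpow '' s)) (hc0 : c ≠ 0) : ¬ Summable c := by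
  obtain ⟨l, hl, rfl⟩ := (Finsupp.mem_span_image_iff_linearCombination ℝ).1 hc
  refine not_summable_linearCombination_natRpow ?_ fun r hr => hs r (hl hr)
  rintro rfl
  exact hc0 (map_zero _)

theorem exists_submodule_rank_continuum_tendsto_zero_not_summable :
    ∃ V : Submodule ℝ (ℕ → ℝ), Module.rank ℝ V = 𝔠 ∧
      ∀ c ∈ V, Tendsto c atTop (𝓝 0) ∧ (c ≠ 0 → ¬ Summable c) := by
  refine ⟨Submodule.span ℝ (natRpow '' Ioo (-1) 0), ?_, fun c hc => ⟨?_, ?_⟩⟩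
  · rw [rank_span_natRpow_image, mk_Ioo_real (by norm_num)]
  · exact tendsto_zero_of_mem_span_natRpow (fun r hr => hr.2) hc
  · exact not_summable_of_mem_span_natRpow (fun r hr => hr.1.le) hc

end PowerSequences

section DisjointSupports

theorem exists_forall_ne_eq_zero_of_pairwise_disjoint_support {ι X E : Type*} [Nonempty ι] [Zero E]
    {f : ι → X → E} (hf : Pairwise (Disjoint on fun i => support (f i))) (x : X) :
    ∃ i, ∀ j, j ≠ i → f j x = 0 := by
  by_cases h : ∃ i, f i x ≠ 0
  · obtain ⟨i, hi⟩ := h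
    exact ⟨i, fun j hji => by_contra fun hj => disjoint_left.1 (hf hji) hj hi⟩
  · push Not at h
    exact ⟨Classical.arbitrary ι, fun j _ => h j⟩

theorem tendstoUniformly_sum_range_of_pairwise_disjoint_support {X E : Type*}
    [NormedAddCommGroup E] {f : ℕ → X → E} (hf : Pairwise (Disjoint on fun n => support (f n)))
    {u : ℕ → ℝ} (hu : Tendsto u atTop (𝓝 0)) (hfu : ∀ n x, ‖f n x‖ ≤ u n) :
    TendstoUniformly (fun N x => ∑ n ∈ Finset.range N, f n x) (fun x => ∑' n, f n x) atTop := by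
  refine Metric.tendstoUniformly_iff.2 fun ε hε => ?_
  obtain ⟨N₀, hN₀⟩ := eventually_atTop.1 (hu.eventually_lt_const hε)
  filter_upwards [eventually_ge_atTop N₀] with N hN x
  obtain ⟨k, hk⟩ := exists_forall_ne_eq_zero_of_pairwise_disjoint_support hf x
  rw [tsum_eq_single k hk]
  rcases lt_or_ge k N with hkN | hNk
  · rwa [Finset.sum_eq_single_of_mem k (Finset.mem_range.2 hkN) fun n _ => hk n, dist_self]
  · have partial_sum_eq_zero : ∑ n ∈ Finset.range N, f n x = 0 :=
      Finset.sum_eq_zero fun n hn => hk n ((Finset.mem_range.1 hn).trans_le hNk).ne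
    rw [partial_sum_eq_zero, dist_zero_right]
    exact (hfu k x).trans_lt (hN₀ k (hN.trans hNk))

end DisjointSupports

section CompactSpace

variable {X : Type*} [TopologicalSpace X] [CompactSpace X]

/-- Anti M-Weierstrass sequences on an arbitrary compact space; `AntiMW a b` is the case
`X = [a, b]`. -/
def IsAntiMWeierstrass_s7 (f : ℕ → C(X, ℝ)) : Prop :=
  (∀ x, Summable fun n => |f n x|) ∧
  (∃ S : X → ℝ, TendstoUniformly (fun N x => ∑ n ∈ Finset.range N, f n x) S atTop) ∧
  ¬ Summable fun n => ‖f n‖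

theorem isAntiMWeierstrass_of_pairwise_disjoint_support {f : ℕ → C(X, ℝ)}
    (hf : Pairwise (Disjoint on fun n => support (f n)))
    (hlim : Tendsto (fun n => ‖f n‖) atTop (𝓝 0)) (hsum : ¬ Summable fun n => ‖f n‖) :
    IsAntiMWeierstrass_s7 f := by
  refine ⟨fun x => ?_, ⟨fun x => ∑' n, f n x, ?_⟩, hsum⟩
  · obtain ⟨k, hk⟩ := exists_forall_ne_eq_zero_of_pairwise_disjoint_support hf x
    exact (hasSum_single k fun n hn => abs_eq_zero.2 (hk n hn)).summable
  · exact tendstoUniformly_sum_range_of_pairwise_disjoint_support hf hlim fun n =>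
      (f n).norm_coe_le_norm

theorem isAntiMWeierstrass_smul {g : ℕ → C(X, ℝ)} (hnorm : ∀ n, ‖g n‖ = 1)
    (hdisj : Pairwise (Disjoint on fun n => support (g n))) {c : ℕ → ℝ}
    (hlim : Tendsto c atTop (𝓝 0)) (hsum : ¬ Summable c) :
    IsAntiMWeierstrass_s7 fun n => c n • g n := by
  have norm_term (n : ℕ) : ‖c n • g n‖ = ‖c n‖ := by rw [norm_smul, hnorm, mul_one]
  refine isAntiMWeierstrass_of_pairwise_disjoint_support ?_ ?_ ?_
  · exact fun m n hmn => (hdisj hmn).mono (support_const_smul_subset _ _)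
      (support_const_smul_subset _ _)
  · simpa only [norm_term, norm_zero] using hlim.norm
  · simpa only [norm_term, summable_norm_iff] using hsum

variable [T2Space X]

theorem exists_norm_eq_one_support_subset {U : Set X} (hU : IsOpen U) (hne : U.Nonempty) :
    ∃ g : C(X, ℝ), ‖g‖ = 1 ∧ support g ⊆ U := by
  obtain ⟨p, hp⟩ := hne
  obtain ⟨g, hg0, hg1, hg01⟩ := exists_continuous_zero_one_of_isClosed hU.isClosed_compl
    isClosed_singleton (disjoint_singleton_right.2 (not_not.2 hp))
  have hgp : g p = 1 := hg1 (mem_singleton p)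
  refine ⟨g, le_antisymm ?_ ?_, fun x hx => by_contra fun hxU => hx (hg0 hxU)⟩
  · refine (g.norm_le zero_le_one).2 fun x => ?_
    rw [Real.norm_of_nonneg (hg01 x).1]
    exact (hg01 x).2
  · simpa only [hgp, norm_one] using g.norm_coe_le_norm p

variable (X) [Infinite X]

theorem exists_seq_norm_eq_one_pairwise_disjoint_support :
    ∃ g : ℕ → C(X, ℝ), (∀ n, ‖g n‖ = 1) ∧ Pairwise (Disjoint on fun n => support (g n)) := by
  obtain ⟨U, hU_inf, hU_open, hU_disj⟩ := exists_seq_infinite_isOpen_pairwise_disjoint X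
  choose g hnorm hsupp using fun n =>
    exists_norm_eq_one_support_subset (hU_open n) (hU_inf n).nonempty
  exact ⟨g, hnorm, fun m n hmn => (hU_disj hmn).mono (hsupp m) (hsupp n)⟩

theorem stmt7_general :
    ∃ M : Submodule ℝ (ℕ → C(X, ℝ)), Module.rank ℝ M = 𝔠 ∧
      ∀ F ∈ M, F ≠ 0 → IsAntiMWeierstrass_s7 F := by
  obtain ⟨g, hnorm, hdisj⟩ := exists_seq_norm_eq_one_pairwise_disjoint_support X
  obtain ⟨V, hrank, hV⟩ := exists_submodule_rank_continuum_tendsto_zero_not_summable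
  let T : (ℕ → ℝ) →ₗ[ℝ] (ℕ → C(X, ℝ)) :=
    LinearMap.pi fun n => (LinearMap.proj n).smulRight (g n)
  have hT : Injective T := fun c d hcd => funext fun n =>
    smul_left_injective ℝ (norm_ne_zero_iff.1 (by simp [hnorm n])) (congrFun hcd n)
  refine ⟨V.map T, ?_, ?_⟩
  · simpa only [hrank, lift_continuum, lift_uzero] using
      (V.equivMapOfInjective T hT).lift_rank_eq.symm
  · rintro _ ⟨c, hc, rfl⟩ hTc
    obtain ⟨hlim, hsum⟩ := hV c hc
    refine isAntiMWeierstrass_smul hnorm hdisj hlim (hsum ?_)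
    rintro rfl
    exact hTc (map_zero T)

end CompactSpace

theorem stmt7 (a b : ℝ) (hab : a < b) :
    ∃ M : Submodule ℝ (ℕ → C(Set.Icc a b, ℝ)),
      Module.rank ℝ M = Cardinal.continuum ∧
      ∀ F ∈ M, F ≠ 0 → AntiMW a b F :=
  have := Set.Icc.infinite hab
  stmt7_general (Set.Icc a b)
end
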